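/- Let d ≥ 1 be an integer and let β ∈ (0, d). There exists a constant C > 0, depending only on d and β, such that for all t₁, t₂, t₃, t₄ > 0, all R > 0, and all ξ ∈ ℝ^d, ∫_{Q_R × Q_R} ∫_{ℝ^{4d}} p_{t₁}(x₁ − ỹ) p_{t₂}(x₂ − z̃) p_{t₃}(y − z) p_{t₄}(ξ − y) ‖y − ỹ‖^{−β} ‖z − z̃‖^{−β} dỹ dz̃ dy dz dx₁ dx₂ ≤ C R^{2d−2β}. (In the paper this is the bound for the quantity Φ^{(2)}(τ, ξ) governing the second-derivative term, with t₁ = t − s, t₂ = t − r, t₃ = s − r, t₄ = τ − s for 0 < r < s < τ < t.) -/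

import Mathlib

open MeasureTheory

noncomputable def heatKernel (d : ℕ) (t : ℝ) (x : EuclideanSpace ℝ (Fin d)) : ℝ :=
  (2 * Real.pi * t) ^ (-(d : ℝ) / 2) * Real.exp (-‖x‖ ^ 2 / (2 * t))

def box (d : ℕ) (R : ℝ) : Set (EuclideanSpace ℝ (Fin d)) :=
  {x | ∀ i, |x i| ≤ R}

open scoped ENNReal

lemma measurable_heatKernel (d : ℕ) (t : ℝ) : Measurable (heatKernel d t) := by
  unfold heatKernel; fun_prop

lemma heatKernel_nonneg (d : ℕ) (t : ℝ) (ht : 0 < t) (x) : 0 ≤ heatKernel d t x := by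
  unfold heatKernel; positivity

lemma integral_heatKernel (d : ℕ) (t : ℝ) (ht : 0 < t) : ∫ x, heatKernel d t x = 1 := by
  have h := GaussianFourier.integral_rexp_neg_mul_sq_norm (V := EuclideanSpace ℝ (Fin d))
    (b := 1 / (2 * t)) (by positivity)
  have e : ∀ x : EuclideanSpace ℝ (Fin d), -‖x‖ ^ 2 / (2 * t) = -(1 / (2 * t)) * ‖x‖ ^ 2 := by
    intro x; ring
  unfold heatKernel
  simp_rw [e]
  rw [integral_const_mul, h, finrank_euclideanSpace_fin]
  have : Real.pi / (1 / (2 * t)) = 2 * Real.pi * t := by field_simp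
  rw [this, ← Real.rpow_add (by positivity)]
  have : -(d : ℝ) / 2 + d / 2 = 0 := by ring
  rw [this, Real.rpow_zero]

lemma lintegral_heatKernel (d : ℕ) (t : ℝ) (ht : 0 < t) :
    ∫⁻ x, ‖heatKernel d t x‖ₑ = 1 := by
  have h := integral_heatKernel d t ht
  have hi : Integrable (heatKernel d t) := by
    by_contra hc
    rw [integral_undef hc] at h
    exact zero_ne_one h
  rw [← ofReal_integral_norm_eq_lintegral_enorm hi]
  simp_rw [Real.norm_of_nonneg (heatKernel_nonneg d t ht _)]
  rw [h, ENNReal.ofReal_one]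

lemma measurableSet_box (d : ℕ) (R : ℝ) : MeasurableSet (box d R) := by
  unfold box
  rw [Set.ofPred_forall]
  exact MeasurableSet.iInter fun i => measurableSet_le (by fun_prop) measurable_const

lemma volume_box_lt_top (d : ℕ) : volume (box d 1) < ∞ := by
  apply Bornology.IsBounded.measure_lt_top
  rw [Metric.isBounded_iff_subset_closedBall 0]
  refine ⟨√(∑ i : Fin d, 1), fun x hx => ?_⟩
  rw [mem_closedBall_zero_iff, EuclideanSpace.norm_eq]
  apply Real.sqrt_le_sqrt
  apply Finset.sum_le_sum
  intro i _
  have := hx i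
  rw [Real.norm_eq_abs]
  exact pow_le_one₀ (abs_nonneg _) this

/-- Riesz kernel, extended nonnegative. -/
noncomputable def rk (d : ℕ) (β : ℝ) (x : EuclideanSpace ℝ (Fin d)) : ℝ≥0∞ := ‖‖x‖ ^ (-β)‖ₑ

lemma measurable_rk (d : ℕ) (β : ℝ) : Measurable (rk d β) := by
  unfold rk; fun_prop

lemma rk_ball (d : ℕ) (hd : 1 ≤ d) (β : ℝ) (hβd : β < d) :
    ∫⁻ x in Metric.ball 0 1, rk d β x < ∞ := by
  have : IntegrableOn (fun x : EuclideanSpace ℝ (Fin d) => ‖x‖ ^ (-β)) (Metric.ball 0 1) := by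
    apply integrableOn_ball_of_norm_le_rpow (by simpa using hd) (C := 1) (α := β)
    · simpa using hβd
    · refine Filter.Eventually.of_forall fun x => ?_
      rw [Real.norm_of_nonneg (by positivity), one_mul]
    · exact Measurable.aestronglyMeasurable (by fun_prop)
  exact this.2

lemma rk_box_one (d : ℕ) (β : ℝ) (hβ0 : 0 < β) (a : EuclideanSpace ℝ (Fin d)) :
    ∫⁻ x in box d 1, rk d β (x - a) ≤
      (∫⁻ x in Metric.ball 0 1, rk d β x) + volume (box d 1) := by
  have h1 : ∀ x, rk d β x ≤ (Metric.ball 0 1).indicator (rk d β) x + 1 := by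
    intro x
    by_cases hx : x ∈ Metric.ball 0 1
    · simp [hx]
    · rw [Set.indicator_of_notMem hx, zero_add]
      have : 1 ≤ ‖x‖ := by simpa using hx
      unfold rk
      rw [Real.enorm_of_nonneg (by positivity), ← ENNReal.ofReal_one]
      exact ENNReal.ofReal_le_ofReal (Real.rpow_le_one_of_one_le_of_nonpos this (by linarith))
  calc _ ≤ ∫⁻ x in box d 1, ((Metric.ball 0 1).indicator (rk d β) (x - a) + 1) :=
        lintegral_mono fun x => h1 _
    _ = (∫⁻ x in box d 1, (Metric.ball 0 1).indicator (rk d β) (x - a)) + volume (box d 1) := by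
        rw [lintegral_add_right _ measurable_const]; simp
    _ ≤ (∫⁻ x, (Metric.ball 0 1).indicator (rk d β) (x - a)) + volume (box d 1) := by
        gcongr; exact Measure.restrict_le_self
    _ = _ := by
        rw [lintegral_sub_right_eq_self (fun x => (Metric.ball 0 1).indicator (rk d β) x),
          lintegral_indicator measurableSet_ball]

lemma rk_box (d : ℕ) (β : ℝ) (hβ0 : 0 < β) (R : ℝ) (hR : 0 < R)
    (a : EuclideanSpace ℝ (Fin d)) :
    ∫⁻ x in box d R, rk d β (x - a) ≤ ENNReal.ofReal (R ^ ((d : ℝ) - β)) *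
      ((∫⁻ x in Metric.ball 0 1, rk d β x) + volume (box d 1)) := by
  have hm : Measurable ((box d R).indicator fun x => rk d β (x - a)) :=
    ((measurable_rk d β).comp (measurable_id.sub_const a)).indicator (measurableSet_box d R)
  have key := Measure.map_addHaar_smul (volume : Measure (EuclideanSpace ℝ (Fin d))) hR.ne'
  have h2 : ∫⁻ x, (box d R).indicator (fun x => rk d β (x - a)) (R • x) =
      ENNReal.ofReal |(R ^ d)⁻¹| * ∫⁻ x in box d R, rk d β (x - a) := by
    rw [← lintegral_map hm (measurable_const_smul R), key, lintegral_smul_measure,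
      lintegral_indicator (measurableSet_box d R)]
    simp
  have h3 : ∀ x, (box d R).indicator (fun x => rk d β (x - a)) (R • x) =
      ENNReal.ofReal (R ^ (-β)) * (box d 1).indicator (fun x => rk d β (x - R⁻¹ • a)) x := by
    intro x
    have hiff : R • x ∈ box d R ↔ x ∈ box d 1 := by
      simp only [box, Set.mem_ofPred_eq, PiLp.smul_apply, smul_eq_mul, abs_mul, abs_of_pos hR]
      refine forall_congr' fun i => ?_
      constructor <;> intro h <;> nlinarith
    by_cases hx : x ∈ box d 1
    · rw [Set.indicator_of_mem (hiff.2 hx), Set.indicator_of_mem hx]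
      have : R • x - a = R • (x - R⁻¹ • a) := by
        rw [smul_sub, smul_inv_smul₀ hR.ne']
      rw [this]
      unfold rk
      rw [norm_smul, Real.norm_of_nonneg hR.le, Real.mul_rpow hR.le (norm_nonneg _), enorm_mul,
        Real.enorm_of_nonneg (by positivity)]
    · rw [Set.indicator_of_notMem (fun h => hx (hiff.1 h)), Set.indicator_of_notMem hx, mul_zero]
  simp_rw [h3] at h2
  rw [lintegral_const_mul' _ _ ENNReal.ofReal_ne_top, lintegral_indicator (measurableSet_box d 1)] at h2
  have h4 : ∫⁻ x in box d R, rk d β (x - a) = ENNReal.ofReal (R ^ ((d : ℝ) - β)) *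
      ∫⁻ x in box d 1, rk d β (x - R⁻¹ • a) := by
    have e1 : R ^ ((d : ℝ) - β) = R ^ d * R ^ (-β) := by
      rw [← Real.rpow_natCast, ← Real.rpow_add hR]; rfl
    rw [e1, ENNReal.ofReal_mul (by positivity), mul_assoc, h2, ← mul_assoc,
      ← ENNReal.ofReal_mul (by positivity), abs_of_pos (by positivity),
      mul_inv_cancel₀ (by positivity), ENNReal.ofReal_one, one_mul]
  rw [h4]
  gcongr
  exact rk_box_one d β hβ0 _

/-- Bound for one factor. -/
lemma factor_bound (d : ℕ) (β : ℝ) (hβ0 : 0 < β) (t : ℝ) (ht : 0 < t) (R : ℝ) (hR : 0 < R)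
    (y : EuclideanSpace ℝ (Fin d)) :
    ∫⁻ x in box d R, ∫⁻ u, ‖heatKernel d t (x - u)‖ₑ * rk d β (y - u) ≤
      ENNReal.ofReal (R ^ ((d : ℝ) - β)) *
      ((∫⁻ x in Metric.ball 0 1, rk d β x) + volume (box d 1)) := by
  have hk := measurable_heatKernel d t
  have hr := measurable_rk d β
  have e : ∀ x, ∫⁻ u, ‖heatKernel d t (x - u)‖ₑ * rk d β (y - u) =
      ∫⁻ u, ‖heatKernel d t u‖ₑ * rk d β (x - (y + u)) := by
    intro x
    rw [← lintegral_sub_left_eq_self (fun u => ‖heatKernel d t u‖ₑ * rk d β (x - (y + u))) x]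
    refine lintegral_congr fun u => ?_
    have : rk d β (x - (y + (x - u))) = rk d β (y - u) := by
      unfold rk
      rw [← norm_neg]; congr 3; abel
    rw [this]
  simp_rw [e]
  rw [lintegral_lintegral_swap (by fun_prop)]
  calc _ = ∫⁻ u, ‖heatKernel d t u‖ₑ * ∫⁻ x in box d R, rk d β (x - (y + u)) := by
        refine lintegral_congr fun u => ?_
        rw [lintegral_const_mul _ (by fun_prop)]
    _ ≤ ∫⁻ u, ‖heatKernel d t u‖ₑ * (ENNReal.ofReal (R ^ ((d : ℝ) - β)) *
      ((∫⁻ x in Metric.ball 0 1, rk d β x) + volume (box d 1))) := by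
        gcongr with u
        exact rk_box d β hβ0 R hR _
    _ = _ := by
        rw [lintegral_mul_const _ (by fun_prop), lintegral_heatKernel d t ht, one_mul]

/-- Tonelli rearrangement with separated kernels. -/
lemma tonelli_six {E : Type*} [MeasurableSpace E] (μ ν : Measure E) [SFinite μ] [SFinite ν]
    (A B : E → E → E → ℝ≥0∞) (G : E → E → ℝ≥0∞)
    (hA : Measurable fun p : E × E × E => A p.1 p.2.1 p.2.2)
    (hB : Measurable fun p : E × E × E => B p.1 p.2.1 p.2.2)
    (hG : Measurable fun p : E × E => G p.1 p.2) :
    ∫⁻ x₁, ∫⁻ x₂, ∫⁻ a, ∫⁻ b, ∫⁻ y, ∫⁻ z, A x₁ a y * B x₂ b z * G y z ∂ν ∂ν ∂ν ∂ν ∂μ ∂μ =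
      ∫⁻ w, G w.1 w.2 * ((∫⁻ x, ∫⁻ a, A x a w.1 ∂ν ∂μ) * (∫⁻ x, ∫⁻ b, B x b w.2 ∂ν ∂μ))
        ∂(ν.prod ν) := by
  have mA : ∀ {X : Type _} [MeasurableSpace X] (f g h : X → E), Measurable f → Measurable g →
      Measurable h → Measurable fun x => A (f x) (g x) (h x) := fun f g h hf hg hh =>
    hA.comp (hf.prodMk (hg.prodMk hh))
  have mB : ∀ {X : Type _} [MeasurableSpace X] (f g h : X → E), Measurable f → Measurable g →
      Measurable h → Measurable fun x => B (f x) (g x) (h x) := fun f g h hf hg hh =>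
    hB.comp (hf.prodMk (hg.prodMk hh))
  have mG : ∀ {X : Type _} [MeasurableSpace X] (f g : X → E), Measurable f → Measurable g →
      Measurable fun x => G (f x) (g x) := fun f g hf hg =>
    hG.comp (hf.prodMk hg)
  have mIA : Measurable fun p : E × E => ∫⁻ a, A p.1 a p.2 ∂ν := by
    apply Measurable.lintegral_prod_right
    exact mA _ _ _ (by fun_prop) (by fun_prop) (by fun_prop)
  have mIB : Measurable fun p : E × E => ∫⁻ a, B p.1 a p.2 ∂ν := by
    apply Measurable.lintegral_prod_right
    exact mB _ _ _ (by fun_prop) (by fun_prop) (by fun_prop)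
  have mJB : Measurable fun y : E => ∫⁻ x, ∫⁻ a, B x a y ∂ν ∂μ := by
    apply Measurable.lintegral_prod_right
    exact mIB.comp (measurable_snd.prodMk measurable_fst)
  -- pass to the product in (y, z)
  have s0 : ∀ x₁ x₂ a b, ∫⁻ y, ∫⁻ z, A x₁ a y * B x₂ b z * G y z ∂ν ∂ν =
      ∫⁻ w, A x₁ a w.1 * B x₂ b w.2 * G w.1 w.2 ∂(ν.prod ν) := by
    intro x₁ x₂ a b
    rw [lintegral_prod]
    exact (((mA _ _ _ (by fun_prop) (by fun_prop) (by fun_prop)).mul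
      (mB _ _ _ (by fun_prop) (by fun_prop) (by fun_prop))).mul
      (mG _ _ (by fun_prop) (by fun_prop))).aemeasurable
  have s1 : ∀ x₁ x₂ a, ∫⁻ b, ∫⁻ y, ∫⁻ z, A x₁ a y * B x₂ b z * G y z ∂ν ∂ν ∂ν =
      ∫⁻ w, A x₁ a w.1 * (∫⁻ b, B x₂ b w.2 ∂ν) * G w.1 w.2 ∂(ν.prod ν) := by
    intro x₁ x₂ a
    simp_rw [s0]
    rw [lintegral_lintegral_swap]
    · refine lintegral_congr fun w => ?_
      rw [lintegral_mul_const, lintegral_const_mul]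
      · exact mB _ _ _ (by fun_prop) (by fun_prop) (by fun_prop)
      · exact (mB _ _ _ (by fun_prop) (by fun_prop) (by fun_prop)).const_mul _
    · exact (((mA _ _ _ (by fun_prop) (by fun_prop) (by fun_prop)).mul
        (mB _ _ _ (by fun_prop) (by fun_prop) (by fun_prop))).mul
        (mG _ _ (by fun_prop) (by fun_prop))).aemeasurable
  have s2 : ∀ x₁ x₂, ∫⁻ a, ∫⁻ b, ∫⁻ y, ∫⁻ z, A x₁ a y * B x₂ b z * G y z ∂ν ∂ν ∂ν ∂ν =
      ∫⁻ w, (∫⁻ a, A x₁ a w.1 ∂ν) * (∫⁻ b, B x₂ b w.2 ∂ν) * G w.1 w.2 ∂(ν.prod ν) := by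
    intro x₁ x₂
    simp_rw [s1]
    rw [lintegral_lintegral_swap]
    · refine lintegral_congr fun w => ?_
      rw [lintegral_mul_const, lintegral_mul_const]
      · exact mA _ _ _ (by fun_prop) (by fun_prop) (by fun_prop)
      · exact (mA _ _ _ (by fun_prop) (by fun_prop) (by fun_prop)).mul_const _
    · exact (((mA _ _ _ (by fun_prop) (by fun_prop) (by fun_prop)).mul
        (mIB.comp (f := fun p : E × E × E => (x₂, p.2.2)) (by fun_prop))).mul
        (mG _ _ (by fun_prop) (by fun_prop))).aemeasurable
  have s3 : ∀ x₁, ∫⁻ x₂, ∫⁻ a, ∫⁻ b, ∫⁻ y, ∫⁻ z, A x₁ a y * B x₂ b z * G y z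
        ∂ν ∂ν ∂ν ∂ν ∂μ =
      ∫⁻ w, (∫⁻ a, A x₁ a w.1 ∂ν) * (∫⁻ x, ∫⁻ b, B x b w.2 ∂ν ∂μ) * G w.1 w.2
        ∂(ν.prod ν) := by
    intro x₁
    simp_rw [s2]
    rw [lintegral_lintegral_swap]
    · refine lintegral_congr fun w => ?_
      rw [lintegral_mul_const, lintegral_const_mul]
      · exact mIB.comp (f := fun x => (x, w.2)) (by fun_prop)
      · exact (mIB.comp (f := fun x => (x, w.2)) (by fun_prop)).const_mul _
    · exact (((mIA.comp (f := fun p : E × E × E => (x₁, p.2.1)) (by fun_prop)).mul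
        (mIB.comp (f := fun p : E × E × E => (p.1, p.2.2)) (by fun_prop))).mul
        (mG _ _ (by fun_prop) (by fun_prop))).aemeasurable
  simp_rw [s3]
  rw [lintegral_lintegral_swap]
  · refine lintegral_congr fun w => ?_
    rw [lintegral_mul_const, lintegral_mul_const]
    · ring
    · exact mIA.comp (f := fun x => (x, w.1)) (by fun_prop)
    · exact (mIA.comp (f := fun x => (x, w.1)) (by fun_prop)).mul_const _
  · exact (((mIA.comp (f := fun p : E × E × E => (p.1, p.2.1)) (by fun_prop)).mul
      (mJB.comp (f := fun p : E × E × E => p.2.2) (by fun_prop))).mul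
      (mG _ _ (by fun_prop) (by fun_prop))).aemeasurable

theorem stmt_7 (d : ℕ) (hd : 1 ≤ d) (β : ℝ) (hβ0 : 0 < β) (hβd : β < d) :
    ∃ C : ℝ, 0 < C ∧ ∀ t₁ t₂ t₃ t₄ : ℝ, 0 < t₁ → 0 < t₂ → 0 < t₃ → 0 < t₄ →
      ∀ R : ℝ, 0 < R → ∀ ξ : EuclideanSpace ℝ (Fin d),
      (∫ x₁ in box d R, ∫ x₂ in box d R,
          ∫ ytil : EuclideanSpace ℝ (Fin d), ∫ ztil : EuclideanSpace ℝ (Fin d),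
          ∫ y : EuclideanSpace ℝ (Fin d), ∫ z : EuclideanSpace ℝ (Fin d),
            heatKernel d t₁ (x₁ - ytil) * heatKernel d t₂ (x₂ - ztil) *
              heatKernel d t₃ (y - z) * heatKernel d t₄ (ξ - y) *
              ‖y - ytil‖ ^ (-β) * ‖z - ztil‖ ^ (-β)) ≤
        C * R ^ (2 * (d : ℝ) - 2 * β) := by
  set K : ℝ≥0∞ := (∫⁻ x in Metric.ball 0 1, rk d β x) + volume (box d 1) with hK
  have hKtop : K ≠ ∞ := (ENNReal.add_lt_top.2 ⟨rk_ball d hd β hβd, volume_box_lt_top d⟩).ne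
  refine ⟨K.toReal ^ 2 + 1, by positivity, ?_⟩
  intro t₁ t₂ t₃ t₄ h₁ h₂ h₃ h₄ R hR ξ
  have hk := fun t => measurable_heatKernel d t
  have hr := measurable_rk d β
  set S : ℝ≥0∞ := ENNReal.ofReal (R ^ ((d : ℝ) - β)) * K with hS
  have bound : ‖(∫ x₁ in box d R, ∫ x₂ in box d R,
          ∫ ytil : EuclideanSpace ℝ (Fin d), ∫ ztil : EuclideanSpace ℝ (Fin d),
          ∫ y : EuclideanSpace ℝ (Fin d), ∫ z : EuclideanSpace ℝ (Fin d),
            heatKernel d t₁ (x₁ - ytil) * heatKernel d t₂ (x₂ - ztil) *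
              heatKernel d t₃ (y - z) * heatKernel d t₄ (ξ - y) *
              ‖y - ytil‖ ^ (-β) * ‖z - ztil‖ ^ (-β))‖ₑ ≤ S * S := by
    calc _ ≤ ∫⁻ x₁ in box d R, ∫⁻ x₂ in box d R,
          ∫⁻ ytil : EuclideanSpace ℝ (Fin d), ∫⁻ ztil : EuclideanSpace ℝ (Fin d),
          ∫⁻ y : EuclideanSpace ℝ (Fin d), ∫⁻ z : EuclideanSpace ℝ (Fin d),
            (‖heatKernel d t₁ (x₁ - ytil)‖ₑ * rk d β (y - ytil)) *
            (‖heatKernel d t₂ (x₂ - ztil)‖ₑ * rk d β (z - ztil)) *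
            (‖heatKernel d t₄ (ξ - y)‖ₑ * ‖heatKernel d t₃ (y - z)‖ₑ) := by
          refine (enorm_integral_le_lintegral_enorm _).trans (lintegral_mono fun x₁ => ?_)
          refine (enorm_integral_le_lintegral_enorm _).trans (lintegral_mono fun x₂ => ?_)
          refine (enorm_integral_le_lintegral_enorm _).trans (lintegral_mono fun a => ?_)
          refine (enorm_integral_le_lintegral_enorm _).trans (lintegral_mono fun b => ?_)
          refine (enorm_integral_le_lintegral_enorm _).trans (lintegral_mono fun y => ?_)
          refine (enorm_integral_le_lintegral_enorm _).trans (lintegral_mono fun z => ?_)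
          simp only [enorm_mul, rk]
          apply le_of_eq
          ring
      _ = ∫⁻ w : EuclideanSpace ℝ (Fin d) × EuclideanSpace ℝ (Fin d),
          (‖heatKernel d t₄ (ξ - w.1)‖ₑ * ‖heatKernel d t₃ (w.1 - w.2)‖ₑ) *
          ((∫⁻ x in box d R, ∫⁻ a, ‖heatKernel d t₁ (x - a)‖ₑ * rk d β (w.1 - a)) *
           (∫⁻ x in box d R, ∫⁻ a, ‖heatKernel d t₂ (x - a)‖ₑ * rk d β (w.2 - a))) := by
          exact tonelli_six (volume.restrict (box d R)) volume
            (fun x a y => ‖heatKernel d t₁ (x - a)‖ₑ * rk d β (y - a))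
            (fun x a y => ‖heatKernel d t₂ (x - a)‖ₑ * rk d β (y - a))
            (fun y z => ‖heatKernel d t₄ (ξ - y)‖ₑ * ‖heatKernel d t₃ (y - z)‖ₑ)
            (by fun_prop) (by fun_prop) (by fun_prop)
      _ ≤ ∫⁻ w : EuclideanSpace ℝ (Fin d) × EuclideanSpace ℝ (Fin d),
          (‖heatKernel d t₄ (ξ - w.1)‖ₑ * ‖heatKernel d t₃ (w.1 - w.2)‖ₑ) * (S * S) := by
          gcongr with w
          · exact factor_bound d β hβ0 t₁ h₁ R hR _
          · exact factor_bound d β hβ0 t₂ h₂ R hR _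
      _ = S * S := by
          rw [lintegral_mul_const _ (by fun_prop), Measure.volume_eq_prod,
            lintegral_prod _ (by fun_prop)]
          have e : ∀ y : EuclideanSpace ℝ (Fin d), ∫⁻ z, ‖heatKernel d t₄ (ξ - y)‖ₑ *
              ‖heatKernel d t₃ (y - z)‖ₑ = ‖heatKernel d t₄ (ξ - y)‖ₑ := by
            intro y
            rw [lintegral_const_mul _ (by fun_prop),
              lintegral_sub_left_eq_self (fun z => ‖heatKernel d t₃ z‖ₑ) y,
              lintegral_heatKernel d t₃ h₃, mul_one]
          simp only [e]
          rw [lintegral_sub_left_eq_self (fun z => ‖heatKernel d t₄ z‖ₑ) ξ,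
              lintegral_heatKernel d t₄ h₄, one_mul]
  have hStop : S * S ≠ ∞ := by
    have : S ≠ ∞ := ENNReal.mul_ne_top ENNReal.ofReal_ne_top hKtop
    exact ENNReal.mul_ne_top this this
  have h5 := ENNReal.toReal_mono hStop bound
  rw [toReal_enorm] at h5
  refine (Real.le_norm_self _).trans (h5.trans ?_)
  have e2 : R ^ (2 * (d : ℝ) - 2 * β) = R ^ ((d : ℝ) - β) * R ^ ((d : ℝ) - β) := by
    rw [← Real.rpow_add hR]; congr 1; ring
  have hp : 0 < R ^ ((d : ℝ) - β) := by positivity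
  rw [hS, ENNReal.toReal_mul, ENNReal.toReal_mul, ENNReal.toReal_ofReal hp.le, e2]
  nlinarith [mul_pos hp hp]
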